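/- arXiv:2604.22110 — 2 statements merged into one kernel-verified Lean document; each statement's English description precedes it below -/
import Mathlib

section
/- Let K ≥ 1, let q be a probability vector in ℝ^K, and let A = (A_1,…,A_K) be a random probability vector supported in the interior of the simplex (A_j > 0 a.s.) with E[|log A_j|] < ∞ for all j, and mean μ = E[A] (so μ_j > 0). Then ∑_{j=1}^K q_j E[log A_j] = −H(q) − KL(q‖μ) − ∑_{j=1}^K q_j E[D_F(A_j‖μ_j)], where H(q) = −∑_j q_j log q_j, KL(q‖μ) = ∑_j q_j log(q_j/μ_j), and D_F(x‖y) = x/y − log(x/y) − 1. -/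
open MeasureTheory
open scoped BigOperators

/-!
The Jensen gap `log (E X) - E (log X)` of a positive random variable `X` is `E (D_F(X‖E X))`,
because the linear part `X / E X - 1` of the divergence has mean zero. Averaging this over the
coordinates of `A` with weights `q` leaves `∑ j, q j * log (μ j)`, the negative of the
cross-entropy of `μ` relative to `q`, which is `-H(q) - KL(q‖μ)`.
-/

/-- The Bregman divergence `D_F(x‖y)` of `F = -log` (the Itakura–Saito divergence), whose mean is
the variance penalty. It is given in closed form rather than as `F x - F y - F' y * (x - y)`; the
two agree for `x, y > 0`. -/
noncomputable def bregmanNegLog (x y : ℝ) : ℝ :=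
  x / y - Real.log (x / y) - 1

theorem bregmanNegLog_eq_of_pos {x y : ℝ} (hx : 0 < x) (hy : 0 < y) :
    bregmanNegLog x y = x / y - Real.log x + (Real.log y - 1) := by
  rw [bregmanNegLog, Real.log_div hx.ne' hy.ne']
  ring

theorem sum_mul_log_sub_sum_mul_log_div {ι : Type*} {s : Finset ι} {q μ : ι → ℝ}
    (hq : ∀ j ∈ s, 0 ≤ q j) (hμ : ∀ j ∈ s, 0 < μ j) :
    ∑ j ∈ s, q j * Real.log (q j) - ∑ j ∈ s, q j * Real.log (q j / μ j)
      = ∑ j ∈ s, q j * Real.log (μ j) := by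
  rw [← Finset.sum_sub_distrib]
  refine Finset.sum_congr rfl fun j hj => ?_
  rcases (hq j hj).eq_or_lt with hzero | hpos
  · simp [← hzero]
  · rw [Real.log_div hpos.ne' (hμ j hj).ne']
    ring

section PositiveRandomVariable

variable {Ω : Type*} [MeasurableSpace Ω] {P : Measure Ω} {X : Ω → ℝ}

theorem integral_pos_of_ae_pos [NeZero P] (hX : Integrable X P) (hpos : ∀ᵐ ω ∂P, 0 < X ω) :
    0 < ∫ ω, X ω ∂P := by
  have hnonneg : 0 ≤ᵐ[P] X := hpos.mono fun _ h => h.le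
  refine (integral_nonneg_of_ae hnonneg).lt_of_ne' fun hzero => ?_
  have hX0 : X =ᵐ[P] 0 := (integral_eq_zero_iff_of_nonneg_ae hnonneg hX).mp hzero
  obtain ⟨ω, hω, hω0⟩ := (hpos.and hX0).exists
  exact hω.ne' hω0

variable [IsProbabilityMeasure P]

theorem integral_bregmanNegLog {m : ℝ} (hX : Integrable X P)
    (hlog : Integrable (fun ω => Real.log (X ω)) P) (hpos : ∀ᵐ ω ∂P, 0 < X ω) (hm : 0 < m) :
    ∫ ω, bregmanNegLog (X ω) m ∂P
      = (∫ ω, X ω ∂P) / m - ∫ ω, Real.log (X ω) ∂P + (Real.log m - 1) := by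
  have hdiv : Integrable (fun ω => X ω / m) P := hX.div_const m
  have hsub : Integrable (fun ω => X ω / m - Real.log (X ω)) P := hdiv.sub hlog
  calc
    ∫ ω, bregmanNegLog (X ω) m ∂P
        = ∫ ω, (X ω / m - Real.log (X ω) + (Real.log m - 1)) ∂P :=
      integral_congr_ae (hpos.mono fun _ h => bregmanNegLog_eq_of_pos h hm)
    _ = (∫ ω, X ω ∂P) / m - ∫ ω, Real.log (X ω) ∂P + (Real.log m - 1) := by
      rw [integral_add hsub (integrable_const _), integral_sub hdiv hlog, integral_div,
        integral_const, probReal_univ, one_smul]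

theorem log_integral_sub_integral_bregmanNegLog (hX : Integrable X P)
    (hlog : Integrable (fun ω => Real.log (X ω)) P) (hpos : ∀ᵐ ω ∂P, 0 < X ω) :
    Real.log (∫ ω, X ω ∂P) - ∫ ω, bregmanNegLog (X ω) (∫ ω', X ω' ∂P) ∂P
      = ∫ ω, Real.log (X ω) ∂P := by
  have hmean : 0 < ∫ ω, X ω ∂P := integral_pos_of_ae_pos hX hpos
  rw [integral_bregmanNegLog hX hlog hpos hmean, div_self hmean.ne']
  ring

end PositiveRandomVariable

theorem stmt6_general {Ω ι : Type*} [MeasurableSpace Ω] (P : Measure Ω) [IsProbabilityMeasure P]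
    [Fintype ι] (q : ι → ℝ) (hq : ∀ j, 0 ≤ q j)
    (A : Ω → ι → ℝ)
    (hApos : ∀ j, ∀ᵐ ω ∂P, 0 < A ω j)
    (hAint : ∀ j, Integrable (fun ω => A ω j) P)
    (hlog : ∀ j, Integrable (fun ω => Real.log (A ω j)) P)
    (μ : ι → ℝ) (hμ : ∀ j, μ j = ∫ ω, A ω j ∂P) :
    ∑ j, q j * ∫ ω, Real.log (A ω j) ∂P
      = -(-∑ j, q j * Real.log (q j)) - (∑ j, q j * Real.log (q j / μ j))
        - ∑ j, q j * ∫ ω, bregmanNegLog (A ω j) (μ j) ∂P := by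
  have hμpos (j : ι) : 0 < μ j := hμ j ▸ integral_pos_of_ae_pos (hAint j) (hApos j)
  have hgap (j : ι) : Real.log (μ j) - ∫ ω, bregmanNegLog (A ω j) (μ j) ∂P
      = ∫ ω, Real.log (A ω j) ∂P := by
    rw [hμ j]
    exact log_integral_sub_integral_bregmanNegLog (hAint j) (hlog j) (hApos j)
  rw [neg_neg, sum_mul_log_sub_sum_mul_log_div (fun j _ => hq j) fun j _ => hμpos j,
    ← Finset.sum_sub_distrib]
  simp only [← mul_sub, hgap]

/-- **Decomposition of the expected log-score of a stochastic simplex action.**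
For a probability vector `q ∈ ℝ^K` and a random probability vector `A` supported in
the interior of the simplex with `E[|log A_j|] < ∞` and mean `μ = E[A]` (so `μ_j > 0`),
`∑_j q_j E[log A_j] = −H(q) − KL(q‖μ) − ∑_j q_j E[D_F(A_j‖μ_j)]`,
where `H(q) = −∑_j q_j log q_j`, `KL(q‖μ) = ∑_j q_j log (q_j/μ_j)`, and
`D_F(x‖y) = x/y − log(x/y) − 1`. -/
theorem stmt6 {Ω : Type*} [MeasurableSpace Ω] (P : Measure Ω) [IsProbabilityMeasure P]
    (K : ℕ) (hK : 1 ≤ K)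
    (q : Fin K → ℝ) (hq0 : ∀ j, 0 ≤ q j) (hq1 : ∑ j, q j = 1)
    (A : Ω → Fin K → ℝ)
    (hApos : ∀ᵐ ω ∂P, ∀ j, 0 < A ω j)
    (hAsimplex : ∀ᵐ ω ∂P, ∑ j, A ω j = 1)
    (hAint : ∀ j, Integrable (fun ω => A ω j) P)
    (hlog : ∀ j, Integrable (fun ω => Real.log (A ω j)) P)
    (μ : Fin K → ℝ) (hμ : ∀ j, μ j = ∫ ω, A ω j ∂P) (hμpos : ∀ j, 0 < μ j) :
    ∑ j, q j * ∫ ω, Real.log (A ω j) ∂P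
      = -(-∑ j, q j * Real.log (q j)) - (∑ j, q j * Real.log (q j / μ j))
        - ∑ j, q j * ∫ ω, (A ω j / μ j - Real.log (A ω j / μ j) - 1) ∂P := by
  exact stmt6_general P q hq0 A (fun j => hApos.mono fun _ h => h j) hAint hlog μ hμ
end

section
/- Let K ≥ 2, d ≥ 1, γ ∈ (0,1), B > 0. For each t ≥ 1 let (τ_t(i), y_i)_{i=1}^n be feature–label pairs with τ_t(i) ∈ ℝ^d, ‖τ_t(i)‖₂ ≤ B, and y_i ∈ {1,…,K}, and define the per-step loss L_t(W) = (1/n)∑_{i=1}^n −log softmax(W τ_t(i))_{y_i} and the geometric mixture L(W) = ∑_{t=1}^∞ (1−γ) γ^{t−1} L_t(W) on the space V of matrices W ∈ ℝ^{K×d} whose last row is zero. Suppose there exists a step t₀ such that for every nonzero U ∈ V, c_U := (1/n)∑_{i=1}^n max(0, max_{k≠y_i}(Uτ_{t₀}(i))_k − (Uτ_{t₀}(i))_{y_i}) > 0. Then L is continuous and coercive on V (L(W) → ∞ as ‖W‖_F → ∞), and L attains its minimum at some W* ∈ V with ‖W*‖_F < ∞. -/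
open scoped BigOperators

/-- `softmax z k = exp (z k) / ∑ j, exp (z j)`. -/
noncomputable def softmax {K : ℕ} (z : Fin K → ℝ) (k : Fin K) : ℝ :=
  Real.exp (z k) / ∑ j, Real.exp (z j)

/-- The (negative classification) margin `max_{k ≠ y} z_k − z_y` of logits `z` w.r.t. `y`. -/
noncomputable def margin {K : ℕ} (hK : 2 ≤ K) (z : Fin K → ℝ) (y : Fin K) : ℝ :=
  (Finset.univ.erase y).sup'
    (by
      rw [← Finset.card_pos, Finset.card_erase_of_mem (Finset.mem_univ y),
        Finset.card_univ, Fintype.card_fin]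
      omega) z - z y

/-- Frobenius norm of a real matrix. -/
noncomputable def frobNorm {K d : ℕ} (W : Matrix (Fin K) (Fin d) ℝ) : ℝ :=
  Real.sqrt (∑ k, ∑ j, W k j ^ 2)

/-- Euclidean norm of a vector in `ℝ^d`. -/
noncomputable def euclNorm {d : ℕ} (v : Fin d → ℝ) : ℝ :=
  Real.sqrt (∑ j, v j ^ 2)

/-- Per-step average cross-entropy of the shared classifier `W` on step-`t` features. -/
noncomputable def stepLoss {K d n : ℕ} (τ : Fin n → Fin d → ℝ) (y : Fin n → Fin K)
    (W : Matrix (Fin K) (Fin d) ℝ) : ℝ :=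
  (1 / (n : ℝ)) * ∑ i, -Real.log (softmax (W.mulVec (τ i)) (y i))

/-- The geometric mixture objective `L(W) = ∑_{t ≥ 1} (1−γ)γ^{t−1} L_t(W)`
(here the index `t : ℕ` plays the role of `t − 1`). -/
noncomputable def mixLoss {K d n : ℕ} (γ : ℝ) (τ : ℕ → Fin n → Fin d → ℝ)
    (y : Fin n → Fin K) (W : Matrix (Fin K) (Fin d) ℝ) : ℝ :=
  ∑' t : ℕ, (1 - γ) * γ ^ t * stepLoss (τ t) y W

/-!
Cross-entropy dominates the hinge of the margin: `-log (softmax z y) ≥ z k - z y` for every `k`, and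
it is nonnegative. Hence `L(W)` is at least the mixture `H(W)` of the average hinges, which is
continuous, positively homogeneous of degree one and, by non-separability, positive on `V \ {0}`.
Compactness of the unit sphere of `V` then gives `c > 0` with `c ‖W‖_F ≤ H(W) ≤ L(W)` on `V`.
Both mixtures are continuous because the losses at all steps are bounded by the same affine
function of `‖W‖_F`, so that the series converge locally uniformly.
-/

open Set Filter Topology

section ProperSpace

variable {E : Type*} [NormedAddCommGroup E] [ProperSpace E] {s : Set E} {f : E → ℝ}

lemma exists_pos_forall_mul_norm_le_of_pos_homogeneous [NormedSpace ℝ E] (hs : IsClosed s)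
    (hs_smul : ∀ r : ℝ, 0 ≤ r → ∀ x ∈ s, r • x ∈ s) (hf : ContinuousOn f s)
    (hf_smul : ∀ r : ℝ, 0 ≤ r → ∀ x ∈ s, f (r • x) = r * f x)
    (hf_pos : ∀ x ∈ s, x ≠ 0 → 0 < f x) :
    ∃ c > 0, ∀ x ∈ s, c * ‖x‖ ≤ f x := by
  have hcompact : IsCompact (Metric.sphere (0 : E) 1 ∩ s) := (isCompact_sphere 0 1).inter_right hs
  obtain ⟨c, hc, hle⟩ := hcompact.exists_forall_le' (hf.mono inter_subset_right) (a := 0)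
    fun x hx ↦ hf_pos x hx.2 (ne_zero_of_mem_unit_sphere ⟨x, hx.1⟩)
  refine ⟨c, hc, fun x hx ↦ ?_⟩
  rcases eq_or_ne x 0 with rfl | hx0
  · simpa using (hf_smul 0 le_rfl 0 hx).ge
  have hunit : ‖x‖⁻¹ • x ∈ Metric.sphere (0 : E) 1 ∩ s :=
    ⟨by simp [norm_smul, hx0], hs_smul _ (by positivity) x hx⟩
  calc c * ‖x‖ ≤ f (‖x‖⁻¹ • x) * ‖x‖ := by gcongr; exact hle _ hunit
    _ = f x := by
      rw [hf_smul _ (by positivity) x hx]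
      field_simp

lemma exists_forall_le_of_coercive (hs : IsClosed s) (hne : s.Nonempty) (hf : ContinuousOn f s)
    (hcoercive : ∀ C : ℝ, ∃ R : ℝ, ∀ x ∈ s, R ≤ ‖x‖ → C ≤ f x) :
    ∃ x ∈ s, ∀ x' ∈ s, f x ≤ f x' := by
  obtain ⟨x₀, hx₀⟩ := hne
  obtain ⟨R, hR⟩ := hcoercive (f x₀)
  refine hf.exists_isMinOn' hs hx₀ (eventually_inf_principal.2 ?_)
  filter_upwards [tendsto_norm_cocompact_atTop.eventually_ge_atTop R] with x hx hxs
  exact hR x hxs hx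

end ProperSpace

section Mixture

variable {ι X : Type*} {w : ι → ℝ} {F G : ι → X → ℝ} {b : X → ℝ}

/-- The mixture `∑ t, w t * F t x` of the functions `F t` with weights `w t`, such as the loss of a
classifier shared by all refinement steps `t`. As a `tsum`, it is `0` where the series diverges. -/
noncomputable def mixture (w : ι → ℝ) (F : ι → X → ℝ) (x : X) : ℝ :=
  ∑' t, w t * F t x

lemma summable_mixture (hw : Summable w) (hw_nonneg : ∀ t, 0 ≤ w t)
    (hb : ∀ t x, |F t x| ≤ b x) (x : X) : Summable fun t ↦ w t * F t x := by
  refine .of_norm_bounded (hw.mul_right (b x)) fun t ↦ ?_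
  rw [Real.norm_eq_abs, abs_mul, abs_of_nonneg (hw_nonneg t)]
  exact mul_le_mul_of_nonneg_left (hb t x) (hw_nonneg t)

lemma continuous_mixture [TopologicalSpace X] (hw : Summable w) (hw_nonneg : ∀ t, 0 ≤ w t)
    (hF : ∀ t, Continuous (F t)) (hb_cont : Continuous b) (hb : ∀ t x, |F t x| ≤ b x) :
    Continuous (mixture w F) := by
  refine continuous_iff_continuousAt.2 fun x₀ ↦ ?_
  have hmem : {x | b x < b x₀ + 1} ∈ 𝓝 x₀ :=
    (isOpen_lt hb_cont continuous_const).mem_nhds (lt_add_one (b x₀))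
  refine (continuousOn_tsum (fun t ↦ ((hF t).const_mul (w t)).continuousOn)
    (hw.mul_right (b x₀ + 1)) fun t x hx ↦ ?_).continuousAt hmem
  rw [Real.norm_eq_abs, abs_mul, abs_of_nonneg (hw_nonneg t)]
  exact mul_le_mul_of_nonneg_left ((hb t x).trans (le_of_lt hx)) (hw_nonneg t)

lemma mixture_smul [SMul ℝ X] {r : ℝ} {x : X} (hF : ∀ t, F t (r • x) = r * F t x) :
    mixture w F (r • x) = r * mixture w F x := by
  simp only [mixture, hF, mul_left_comm _ r, tsum_mul_left]

lemma mixture_pos {x : X} (hsum : Summable fun t ↦ w t * F t x) (hw : ∀ t, 0 ≤ w t)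
    (hF : ∀ t, 0 ≤ F t x) {t : ι} (hwt : 0 < w t) (hFt : 0 < F t x) : 0 < mixture w F x :=
  hsum.tsum_pos (fun t ↦ mul_nonneg (hw t) (hF t)) t (mul_pos hwt hFt)

lemma mixture_mono {x : X} (hF : Summable fun t ↦ w t * F t x)
    (hG : Summable fun t ↦ w t * G t x) (hw : ∀ t, 0 ≤ w t) (hFG : ∀ t, F t x ≤ G t x) :
    mixture w F x ≤ mixture w G x :=
  hF.tsum_le_tsum (fun t ↦ mul_le_mul_of_nonneg_left (hFG t) (hw t)) hG

end Mixture

section CrossEntropy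

variable {K : ℕ}

lemma sum_exp_pos (z : Fin K → ℝ) (y : Fin K) : 0 < ∑ j, Real.exp (z j) :=
  Finset.sum_pos (fun _ _ ↦ Real.exp_pos _) ⟨y, Finset.mem_univ y⟩

lemma neg_log_softmax (z : Fin K → ℝ) (y : Fin K) :
    -Real.log (softmax z y) = Real.log (∑ j, Real.exp (z j)) - z y := by
  rw [softmax, Real.log_div (Real.exp_pos _).ne' (sum_exp_pos z y).ne', Real.log_exp, neg_sub]

lemma sub_le_neg_log_softmax (z : Fin K → ℝ) (y k : Fin K) :
    z k - z y ≤ -Real.log (softmax z y) := by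
  rw [neg_log_softmax, sub_le_sub_iff_right, Real.le_log_iff_exp_le (sum_exp_pos z y)]
  exact Finset.single_le_sum (f := fun j ↦ Real.exp (z j)) (fun _ _ ↦ (Real.exp_pos _).le)
    (Finset.mem_univ k)

lemma neg_log_softmax_nonneg (z : Fin K → ℝ) (y : Fin K) : 0 ≤ -Real.log (softmax z y) := by
  simpa using sub_le_neg_log_softmax z y y

lemma neg_log_softmax_le {z : Fin K → ℝ} {M : ℝ} (hz : ∀ k, |z k| ≤ M) (y : Fin K) :
    -Real.log (softmax z y) ≤ Real.log K + 2 * M := by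
  have hK : (0 : ℝ) < K := by exact_mod_cast y.pos
  have hsum : ∑ j, Real.exp (z j) ≤ K * Real.exp M := by
    simpa using Finset.sum_le_card_nsmul Finset.univ (fun j ↦ Real.exp (z j)) (Real.exp M)
      fun j _ ↦ Real.exp_le_exp.2 (le_of_abs_le (hz j))
  have hlog : Real.log (∑ j, Real.exp (z j)) ≤ Real.log K + M := by
    simpa [Real.log_mul hK.ne'] using Real.log_le_log (sum_exp_pos z y) hsum
  rw [neg_log_softmax]
  linarith [neg_le_of_abs_le (hz y)]

lemma continuous_neg_log_softmax (y : Fin K) :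
    Continuous fun z : Fin K → ℝ ↦ -Real.log (softmax z y) := by
  simp only [neg_log_softmax]
  have hexp : Continuous fun z : Fin K → ℝ ↦ ∑ j, Real.exp (z j) := by fun_prop
  exact (hexp.log fun z ↦ (sum_exp_pos z y).ne').sub (continuous_apply y)

end CrossEntropy

section Margin

variable {K : ℕ} (hK : 2 ≤ K)

lemma margin_le_neg_log_softmax (z : Fin K → ℝ) (y : Fin K) :
    margin hK z y ≤ -Real.log (softmax z y) := by
  rw [margin, sub_le_iff_le_add, Finset.sup'_le_iff]
  exact fun k _ ↦ sub_le_iff_le_add.1 (sub_le_neg_log_softmax z y k)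

lemma margin_smul {r : ℝ} (hr : 0 ≤ r) (z : Fin K → ℝ) (y : Fin K) :
    margin hK (r • z) y = r * margin hK z y := by
  rw [margin, margin, mul_sub, Finset.mul₀_sup' hr]
  rfl

lemma continuous_margin (y : Fin K) : Continuous fun z : Fin K → ℝ ↦ margin hK z y :=
  (Continuous.finset_sup'_apply _ fun k _ ↦ continuous_apply k).sub (continuous_apply y)

end Margin

section FrobeniusNorm

variable {K d : ℕ}

open scoped Matrix.Norms.Frobenius in
lemma frobNorm_eq_norm (W : Matrix (Fin K) (Fin d) ℝ) : frobNorm W = ‖W‖ := by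
  simp [frobNorm, Matrix.frobenius_norm_def, Real.sqrt_eq_rpow]

lemma continuous_frobNorm : Continuous (frobNorm : Matrix (Fin K) (Fin d) ℝ → ℝ) := by
  unfold frobNorm
  fun_prop

lemma abs_mulVec_le (W : Matrix (Fin K) (Fin d) ℝ) (v : Fin d → ℝ) (k : Fin K) :
    |W.mulVec v k| ≤ frobNorm W * euclNorm v := by
  have hrow : ∑ j, W k j ^ 2 ≤ ∑ k, ∑ j, W k j ^ 2 :=
    Finset.single_le_sum (f := fun k ↦ ∑ j, W k j ^ 2)
      (fun _ _ ↦ Finset.sum_nonneg fun _ _ ↦ sq_nonneg _) (Finset.mem_univ k)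
  rw [frobNorm, euclNorm, ← Real.sqrt_mul (by positivity)]
  refine Real.abs_le_sqrt ?_
  calc W.mulVec v k ^ 2 ≤ (∑ j, W k j ^ 2) * ∑ j, v j ^ 2 :=
        Finset.sum_mul_sq_le_sq_mul_sq Finset.univ (W k) v
    _ ≤ (∑ k, ∑ j, W k j ^ 2) * ∑ j, v j ^ 2 := by gcongr

end FrobeniusNorm

section StepLoss

variable {K d n : ℕ} (hK : 2 ≤ K) (τ : Fin n → Fin d → ℝ) (y : Fin n → Fin K)

/-- The average hinge `c_U = (1/n) ∑ i, max 0 (max_{k ≠ y i} (U τ_i)_k - (U τ_i)_{y i})` of the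
classifier `U`. It vanishes exactly when `U` separates the features weakly, and it is the positively
homogeneous lower bound for `stepLoss`. -/
noncomputable def meanHinge (U : Matrix (Fin K) (Fin d) ℝ) : ℝ :=
  (1 / (n : ℝ)) * ∑ i, max 0 (margin hK (U.mulVec (τ i)) (y i))

lemma meanHinge_nonneg (U : Matrix (Fin K) (Fin d) ℝ) : 0 ≤ meanHinge hK τ y U :=
  mul_nonneg (by positivity) (Finset.sum_nonneg fun _ _ ↦ le_max_left _ _)

lemma meanHinge_le_stepLoss (W : Matrix (Fin K) (Fin d) ℝ) :
    meanHinge hK τ y W ≤ stepLoss τ y W :=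
  mul_le_mul_of_nonneg_left (Finset.sum_le_sum fun _ _ ↦
    max_le (neg_log_softmax_nonneg _ _) (margin_le_neg_log_softmax hK _ _)) (by positivity)

lemma meanHinge_smul {r : ℝ} (hr : 0 ≤ r) (U : Matrix (Fin K) (Fin d) ℝ) :
    meanHinge hK τ y (r • U) = r * meanHinge hK τ y U := by
  have hmax (m : ℝ) : max 0 (r * m) = r * max 0 m := by rw [mul_max_of_nonneg 0 m hr, mul_zero]
  simp only [meanHinge, Matrix.smul_mulVec, margin_smul hK hr, hmax, ← Finset.mul_sum,
    mul_left_comm r]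

lemma continuous_meanHinge : Continuous (meanHinge hK τ y) :=
  continuous_const.mul <| continuous_finsetSum _ fun i _ ↦ continuous_const.max <|
    (continuous_margin hK (y i)).comp (continuous_id.matrix_mulVec continuous_const)

lemma continuous_stepLoss : Continuous (stepLoss τ y) :=
  continuous_const.mul <| continuous_finsetSum _ fun i _ ↦
    (continuous_neg_log_softmax (y i)).comp (continuous_id.matrix_mulVec continuous_const)

lemma stepLoss_nonneg (W : Matrix (Fin K) (Fin d) ℝ) : 0 ≤ stepLoss τ y W :=
  mul_nonneg (by positivity) (Finset.sum_nonneg fun _ _ ↦ neg_log_softmax_nonneg _ _)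

variable {τ}

lemma abs_stepLoss_le (hn : 0 < n) {B : ℝ} (hτ : ∀ i, euclNorm (τ i) ≤ B)
    (W : Matrix (Fin K) (Fin d) ℝ) :
    |stepLoss τ y W| ≤ Real.log K + 2 * (frobNorm W * B) := by
  have hlogit (i : Fin n) (k : Fin K) : |W.mulVec (τ i) k| ≤ frobNorm W * B :=
    (abs_mulVec_le W (τ i) k).trans (mul_le_mul_of_nonneg_left (hτ i) (Real.sqrt_nonneg _))
  have hsum : ∑ i, -Real.log (softmax (W.mulVec (τ i)) (y i)) ≤
      Finset.card (Finset.univ : Finset (Fin n)) • (Real.log K + 2 * (frobNorm W * B)) :=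
    Finset.sum_le_card_nsmul _ _ _ fun i _ ↦ neg_log_softmax_le (hlogit i) (y i)
  rw [Finset.card_fin, nsmul_eq_mul] at hsum
  rwa [abs_of_nonneg (stepLoss_nonneg τ y W), stepLoss, one_div,
    inv_mul_le_iff₀ (by exact_mod_cast hn)]

lemma abs_meanHinge_le (hn : 0 < n) {B : ℝ} (hτ : ∀ i, euclNorm (τ i) ≤ B)
    (U : Matrix (Fin K) (Fin d) ℝ) :
    |meanHinge hK τ y U| ≤ Real.log K + 2 * (frobNorm U * B) := by
  rw [abs_of_nonneg (meanHinge_nonneg hK τ y U)]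
  exact (meanHinge_le_stepLoss hK τ y U).trans (le_of_abs_le (abs_stepLoss_le y hn hτ U))

end StepLoss

section MixtureLoss

variable {ι : Type*} {K d n : ℕ} {w : ι → ℝ} {τ : ι → Fin n → Fin d → ℝ} {B : ℝ}

lemma continuous_mixture_stepLoss (hn : 0 < n) (hw : Summable w) (hw_nonneg : ∀ t, 0 ≤ w t)
    (hτ : ∀ t i, euclNorm (τ t i) ≤ B) (y : Fin n → Fin K) :
    Continuous (mixture w fun t ↦ stepLoss (τ t) y) :=
  continuous_mixture hw hw_nonneg (fun t ↦ continuous_stepLoss (τ t) y)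
    (((continuous_frobNorm.mul_const B).const_mul 2).const_add _)
    fun t ↦ abs_stepLoss_le y hn (hτ t)

lemma continuous_mixture_meanHinge (hK : 2 ≤ K) (hn : 0 < n) (hw : Summable w)
    (hw_nonneg : ∀ t, 0 ≤ w t) (hτ : ∀ t i, euclNorm (τ t i) ≤ B) (y : Fin n → Fin K) :
    Continuous (mixture w fun t ↦ meanHinge hK (τ t) y) :=
  continuous_mixture hw hw_nonneg (fun t ↦ continuous_meanHinge hK (τ t) y)
    (((continuous_frobNorm.mul_const B).const_mul 2).const_add _)
    fun t ↦ abs_meanHinge_le hK y hn (hτ t)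

variable {V : Submodule ℝ (Matrix (Fin K) (Fin d) ℝ)} {y : Fin n → Fin K}

open scoped Matrix.Norms.Frobenius in
lemma exists_pos_forall_mul_frobNorm_le_mixture_stepLoss (hK : 2 ≤ K) (hn : 0 < n)
    (hw : Summable w) (hw_nonneg : ∀ t, 0 ≤ w t) (hτ : ∀ t i, euclNorm (τ t i) ≤ B)
    (hsep : ∀ U ∈ V, U ≠ 0 → ∃ t, 0 < w t ∧ 0 < meanHinge hK (τ t) y U) :
    ∃ c > 0, ∀ W ∈ V, c * frobNorm W ≤ mixture w (fun t ↦ stepLoss (τ t) y) W := by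
  have hsum_hinge (W) := summable_mixture hw hw_nonneg (fun t ↦ abs_meanHinge_le hK y hn (hτ t)) W
  have hsum_loss (W) := summable_mixture hw hw_nonneg (fun t ↦ abs_stepLoss_le y hn (hτ t)) W
  obtain ⟨c, hc, hle⟩ : ∃ c > 0, ∀ W ∈ (V : Set _),
      c * ‖W‖ ≤ mixture w (fun t ↦ meanHinge hK (τ t) y) W := by
    refine exists_pos_forall_mul_norm_le_of_pos_homogeneous V.closed_of_finiteDimensional
      (fun r _ W hW ↦ V.smul_mem r hW)
      (continuous_mixture_meanHinge hK hn hw hw_nonneg hτ y).continuousOn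
      (fun r hr W _ ↦ mixture_smul fun t ↦ meanHinge_smul hK (τ t) y hr W) fun U hU hU0 ↦ ?_
    obtain ⟨t, hwt, hUt⟩ := hsep U hU hU0
    exact mixture_pos (hsum_hinge U) hw_nonneg (fun t ↦ meanHinge_nonneg hK (τ t) y U) hwt hUt
  refine ⟨c, hc, fun W hW ↦ ?_⟩
  rw [frobNorm_eq_norm]
  exact (hle W hW).trans (mixture_mono (hsum_hinge W) (hsum_loss W) hw_nonneg
    fun t ↦ meanHinge_le_stepLoss hK (τ t) y W)

open scoped Matrix.Norms.Frobenius in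
lemma exists_forall_le_of_frobNorm_coercive {L : Matrix (Fin K) (Fin d) ℝ → ℝ} (hL : Continuous L)
    (hcoercive : ∀ C : ℝ, ∃ R : ℝ, ∀ W ∈ V, R ≤ frobNorm W → C ≤ L W) :
    ∃ Wstar ∈ V, ∀ W ∈ V, L Wstar ≤ L W := by
  simp only [frobNorm_eq_norm] at hcoercive
  exact exists_forall_le_of_coercive V.closed_of_finiteDimensional ⟨0, V.zero_mem⟩
    hL.continuousOn hcoercive

theorem stmt13_general (hK : 2 ≤ K) (hn : 0 < n) (hw : Summable w) (hw_nonneg : ∀ t, 0 ≤ w t)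
    (hτ : ∀ t i, euclNorm (τ t i) ≤ B)
    (hsep : ∀ U ∈ V, U ≠ 0 → ∃ t, 0 < w t ∧ 0 < meanHinge hK (τ t) y U) :
    ContinuousOn (mixture w fun t ↦ stepLoss (τ t) y) V
      ∧ (∀ C : ℝ, ∃ R : ℝ, ∀ W ∈ V, R ≤ frobNorm W →
          C ≤ mixture w (fun t ↦ stepLoss (τ t) y) W)
      ∧ ∃ Wstar ∈ V, ∀ W ∈ V, mixture w (fun t ↦ stepLoss (τ t) y) Wstar
          ≤ mixture w (fun t ↦ stepLoss (τ t) y) W := by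
  have hcont := continuous_mixture_stepLoss hn hw hw_nonneg hτ y
  obtain ⟨c, hc, hle⟩ :=
    exists_pos_forall_mul_frobNorm_le_mixture_stepLoss hK hn hw hw_nonneg hτ hsep
  have hcoercive (C : ℝ) : ∃ R : ℝ, ∀ W ∈ V, R ≤ frobNorm W →
      C ≤ mixture w (fun t ↦ stepLoss (τ t) y) W :=
    ⟨C / c, fun W hW hR ↦ ((div_le_iff₀' hc).1 hR).trans (hle W hW)⟩
  exact ⟨hcont.continuousOn, hcoercive, exists_forall_le_of_frobNorm_coercive hcont hcoercive⟩

end MixtureLoss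

/-- The subspace of matrices whose row `k` vanishes. For the last row it is the space `V` of the
paper, on which softmax has no shift invariance. -/
def rowZeroSubmodule {K d : ℕ} (k : Fin K) : Submodule ℝ (Matrix (Fin K) (Fin d) ℝ) where
  carrier := {W | ∀ j, W k j = 0}
  add_mem' hU hW j := by simp [hU j, hW j]
  zero_mem' _ := rfl
  smul_mem' r W hW j := by simp [hW j]

/-- **Finite logit scale under shared weights.** With bounded features `‖τ_t(i)‖₂ ≤ B`,
on the space `V` of matrices whose last row is zero, if at some step `t₀` every nonzero
direction `U ∈ V` has strictly positive average hinge margin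
`c_U = (1/n) ∑_i max(0, max_{k ≠ y_i} (Uτ_{t₀}(i))_k − (Uτ_{t₀}(i))_{y_i}) > 0`,
then the geometric mixture `L` is continuous and coercive on `V` and attains its minimum
at some finite `W* ∈ V`. -/
theorem stmt13 (K d n : ℕ) (hK : 2 ≤ K) (hd : 1 ≤ d) (hn : 0 < n)
    (γ B : ℝ) (hγ0 : 0 < γ) (hγ1 : γ < 1) (hB : 0 < B)
    (τ : ℕ → Fin n → Fin d → ℝ) (y : Fin n → Fin K)
    (hτ : ∀ t i, euclNorm (τ t i) ≤ B)
    (t₀ : ℕ)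
    (hsep : ∀ U : Matrix (Fin K) (Fin d) ℝ,
      (∀ j, U ⟨K - 1, by omega⟩ j = 0) → U ≠ 0 →
      0 < (1 / (n : ℝ)) * ∑ i, max 0 (margin hK (U.mulVec (τ t₀ i)) (y i))) :
    ContinuousOn (mixLoss γ τ y)
        {W : Matrix (Fin K) (Fin d) ℝ | ∀ j, W ⟨K - 1, by omega⟩ j = 0}
      ∧ (∀ C : ℝ, ∃ R : ℝ, ∀ W : Matrix (Fin K) (Fin d) ℝ,
          (∀ j, W ⟨K - 1, by omega⟩ j = 0) → R ≤ frobNorm W → C ≤ mixLoss γ τ y W)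
      ∧ ∃ Wstar : Matrix (Fin K) (Fin d) ℝ,
          (∀ j, Wstar ⟨K - 1, by omega⟩ j = 0)
            ∧ ∀ W : Matrix (Fin K) (Fin d) ℝ,
                (∀ j, W ⟨K - 1, by omega⟩ j = 0) → mixLoss γ τ y Wstar ≤ mixLoss γ τ y W :=
  stmt13_general (w := fun t ↦ (1 - γ) * γ ^ t) (V := rowZeroSubmodule ⟨K - 1, by omega⟩) hK hn
    ((summable_geometric_of_lt_one hγ0.le hγ1).mul_left (1 - γ))
    (fun t ↦ mul_nonneg (sub_nonneg.2 hγ1.le) (pow_nonneg hγ0.le t)) hτ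
    fun U hU hU0 ↦ ⟨t₀, mul_pos (sub_pos.2 hγ1) (pow_pos hγ0 t₀), hsep U hU hU0⟩
end
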